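/- Let G be a finite group acting linearly on a finite-dimensional vector space V over a field k whose characteristic does not divide |G|. If the invariant ring k[V]^G is a polynomial algebra (on dim V generators), then G acts on V as a group generated by pseudo-reflections. -/

import Mathlib

open MvPolynomial

variable {k : Type*} [Field k] {r : ℕ}

/-- The algebra automorphism of `k[V] = k[X_1, …, X_r]` induced by a matrix `g`,
sending `X i` to `∑ j, g i j • X j`. -/
noncomputable def matrixAct (g : GL (Fin r) k) :
    MvPolynomial (Fin r) k →ₐ[k] MvPolynomial (Fin r) k :=
  MvPolynomial.aeval fun i => ∑ j, ((g : Matrix (Fin r) (Fin r) k) i j) • X j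

/-- `g ∈ GL(V)` is a pseudo-reflection: it has finite order, is not the identity,
and its fixed subspace has codimension 1 (equivalently `rank (g - 1) = 1`). -/
def IsPseudoReflection (g : GL (Fin r) k) : Prop :=
  IsOfFinOrder g ∧ g ≠ 1 ∧ Matrix.rank ((g : Matrix (Fin r) (Fin r) k) - 1) = 1

/-!
Let `J` be the Jacobian matrix of the generating invariants and `H ≤ G` the subgroup generated by
the pseudo-reflections. An element of the inertia group of a prime of `k[V]` is a pseudo-reflection
or trivial, so `k[V]^H` is unramified over `k[V]^G` in codimension one: a derivation carrying
`k[V]^G` into the multiples of `det J` carries `k[V]^H` into them as well. Applied to the columns of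
the adjugate of `J`, this shows that the gradient of each `a ∈ k[V]^H` is `b J` for a unique
polynomial vector `b`.

Suppose that `a` is homogeneous of degree `n > 0` and that its sum over `G` vanishes. By uniqueness
the entries of `b` are `H`-invariants of trace zero too. By induction on `n` their components of
degree less than `n` vanish, whereas `grad a` has degree `n - 1`; so `grad a = 0`. In characteristic
zero this makes `a = 0`. In characteristic `p` it makes `a` a sum of terms `c u ^ p`, and a
`p⁻¹`-linear substitute for the `p`-th root commutes with `G` and lowers the degree, so again
`a = 0` by induction. Since `|G|` is invertible in `k`, it follows that `k[V]^H = k[V]^G`, and then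
`H = G` by Galois theory.
-/

section Derivations

open scoped Polynomial

variable {R B : Type*} [CommRing R] [CommRing B] [Algebra R B]

/-- The extension of a derivation of `B` to `B[X]` that acts on each coefficient. -/
noncomputable def coeffDerivation (E : Derivation R B B) : Derivation R B[X] B[X] :=
  PolynomialModule.equivPolynomialSelf.compDer E.mapCoeffs

theorem coeff_coeffDerivation (E : Derivation R B B) (p : B[X]) (n : ℕ) :
    (coeffDerivation E p).coeff n = E (p.coeff n) :=
  rfl

theorem derivation_eval_eq (E : Derivation R B B) (p : B[X]) (x : B) :
    E (p.eval x) = (coeffDerivation E p).eval x + p.derivative.eval x * E x := by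
  induction p using Polynomial.induction_on' with
  | add p q hp hq =>
    simp only [map_add, Polynomial.eval_add, hp, hq, add_mul]
    ring
  | monomial n a =>
    have hmono : coeffDerivation E (.monomial n a) = .monomial n (E a) := by
      ext m
      rw [coeff_coeffDerivation, Polynomial.coeff_monomial, Polynomial.coeff_monomial,
        apply_ite E, map_zero]
    simp only [hmono, Polynomial.eval_monomial, Polynomial.derivative_monomial, E.leibniz,
      E.leibniz_pow, smul_eq_mul, nsmul_eq_mul]
    ring

theorem dvd_eval_derivative_mul_derivation (E : Derivation R B B) {d x : B} {p : B[X]}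
    (hp : Polynomial.C d ∣ coeffDerivation E p) (hx : p.eval x = 0) :
    d ∣ p.derivative.eval x * E x := by
  have hroot := derivation_eval_eq E p x
  rw [hx, map_zero] at hroot
  rw [eq_neg_of_add_eq_zero_right hroot.symm, dvd_neg]
  simpa using Polynomial.eval_dvd hp

variable {Γ : Type*} [Group Γ] [MulSemiringAction Γ B]

theorem C_dvd_coeffDerivation (E : Derivation R B B) {d : B}
    (hE : ∀ b : B, (∀ σ : Γ, σ • b = b) → d ∣ E b) (p : B[X]) (hp : ∀ σ : Γ, σ • p = p) :
    Polynomial.C d ∣ coeffDerivation E p := by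
  refine (Polynomial.C_dvd_iff_dvd_coeff _ _).2 fun n => hE (p.coeff n) fun σ => ?_
  rw [← Polynomial.coeff_smul, hp]

theorem dvd_eval_derivative_prodXSubSMul_mul_derivation [Fintype Γ] (E : Derivation R B B) {d : B}
    (hE : ∀ b : B, (∀ σ : Γ, σ • b = b) → d ∣ E b) (x : B) :
    d ∣ (prodXSubSMul Γ B x).derivative.eval x * E x :=
  dvd_eval_derivative_mul_derivation E
    (C_dvd_coeffDerivation E hE _ (prodXSubSMul.smul Γ B x)) (prodXSubSMul.eval Γ B x)

theorem eval_derivative_prod_X_sub_C {ι : Type*} [DecidableEq ι] {s : Finset ι} (y : ι → B) {i : ι}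
    (hi : i ∈ s) :
    (∏ j ∈ s, (Polynomial.X - Polynomial.C (y j))).derivative.eval (y i) =
      ∏ j ∈ s.erase i, (y i - y j) := by
  rw [← Finset.mul_prod_erase s _ hi, Polynomial.derivative_mul]
  simp [Polynomial.eval_prod]

theorem exists_smul_ne_of_map_eval_derivative_prodXSubSMul_eq_zero [Fintype Γ] {D : Type*}
    [CommRing D] [IsDomain D] (φ : B →+* D) {x : B}
    (h : φ ((prodXSubSMul Γ B x).derivative.eval x) = 0) :
    ∃ σ : Γ, σ • x ≠ x ∧ φ (σ • x) = φ x := by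
  classical
  have hbase : MulAction.ofQuotientStabilizer Γ x (1 : Γ) = x := by simp
  have heval := eval_derivative_prod_X_sub_C (MulAction.ofQuotientStabilizer Γ x)
    (Finset.mem_univ (QuotientGroup.mk 1))
  rw [hbase] at heval
  rw [prodXSubSMul, heval, map_prod, Finset.prod_eq_zero_iff] at h
  obtain ⟨q, hq, hqx⟩ := h
  obtain ⟨σ, rfl⟩ := QuotientGroup.mk_surjective q
  rw [map_sub, sub_eq_zero, MulAction.ofQuotientStabilizer_mk] at hqx
  refine ⟨σ, fun hfix => (Finset.mem_erase.1 hq).1 (QuotientGroup.eq.2 ?_), hqx.symm⟩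
  rw [mul_one, inv_mem_iff]
  exact hfix

theorem derivation_eq_zero_of_forall_smul_eq [IsDomain B] [Finite Γ] (E : Derivation R B B)
    (hE : ∀ b : B, (∀ σ : Γ, σ • b = b) → E b = 0) : E = 0 := by
  have := Fintype.ofFinite Γ
  ext x
  have hzero := zero_dvd_iff.1 <| dvd_eval_derivative_prodXSubSMul_mul_derivation E
    (fun b hb => zero_dvd_iff.2 (hE b hb)) x
  refine (mul_eq_zero.1 hzero).resolve_left fun h => ?_
  obtain ⟨σ, hne, heq⟩ :=
    exists_smul_ne_of_map_eval_derivative_prodXSubSMul_eq_zero (RingHom.id B) h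
  exact hne heq

end Derivations

section CodimensionOne

open scoped Polynomial

variable {Γ S : Type*} [Group Γ] [CommRing S] [MulSemiringAction Γ S]

theorem exists_smul_eq_of_map_charpoly_eq {D : Type*} [CommRing D] [IsDomain D] (φ : S →+* D)
    (H : Subgroup Γ) [Fintype H] (z : S) (σ : Γ)
    (h : (σ • MulSemiringAction.charpoly H z).map φ = (MulSemiringAction.charpoly H z).map φ) :
    ∃ τ ∈ H, φ (σ • z) = φ (τ • z) := by
  have hroot : ((MulSemiringAction.charpoly H z).map φ).eval (φ (σ • z)) = 0 := by
    rw [← h, Polynomial.eval_map_apply, Polynomial.smul_eval_smul,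
      MulSemiringAction.eval_charpoly, smul_zero, map_zero]
  rw [MulSemiringAction.charpoly_eq, Polynomial.map_prod, Polynomial.eval_prod,
    Finset.prod_eq_zero_iff] at hroot
  obtain ⟨τ, -, hτ⟩ := hroot
  refine ⟨τ, τ.2, sub_eq_zero.1 ?_⟩
  simpa [Subgroup.smul_def] using hτ

theorem smul_charpoly_of_mem (H : Subgroup Γ) [Fintype H] (z : S) {σ : Γ} (hσ : σ ∈ H) :
    σ • MulSemiringAction.charpoly H z = MulSemiringAction.charpoly H z :=
  MulSemiringAction.smul_charpoly z (⟨σ, hσ⟩ : H)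

theorem coeff_zero_coeff_charpoly (H : Subgroup Γ) [Fintype H] {Z : S[X]}
    (hZ : ∀ σ ∈ H, σ • Z.coeff 0 = Z.coeff 0) :
    ((MulSemiringAction.charpoly H Z).coeff (Fintype.card H - 1)).coeff 0 =
      -(Nat.card H * Z.coeff 0) := by
  have hconst (τ : H) : (τ • Z).coeff 0 = Z.coeff 0 := by
    rw [Polynomial.coeff_smul]
    exact hZ τ τ.2
  rw [MulSemiringAction.charpoly_eq, ← Finset.card_univ,
    Polynomial.prod_X_sub_C_coeff_card_pred _ _ Fintype.card_pos, Polynomial.coeff_neg,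
    Polynomial.finsetSum_coeff, Finset.sum_congr rfl fun τ _ => hconst τ, Finset.sum_const,
    nsmul_eq_mul, Finset.card_univ, Nat.card_eq_fintype_card]

theorem exists_polynomial_separating_inertia [Finite Γ] (I : Ideal S) (a : S) :
    ∃ Z : S[X], Z.coeff 0 = a ∧ ∀ σ τ : Γ,
      (σ • Z).map (Ideal.Quotient.mk I) = (τ • Z).map (Ideal.Quotient.mk I) →
        σ * τ⁻¹ ∈ I.inertia Γ := by
  classical
  obtain ⟨n, ⟨e⟩⟩ := Finite.exists_equiv_fin (Γ × Γ)
  have hwitness : ∀ g : Γ × Γ, ∃ s : S, g.1 • s - g.2 • s ∈ I → g.1 * g.2⁻¹ ∈ I.inertia Γ := by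
    intro g
    by_cases hg : g.1 * g.2⁻¹ ∈ I.inertia Γ
    · exact ⟨0, fun _ => hg⟩
    · obtain ⟨s, hs⟩ := not_forall.1 hg
      refine ⟨g.2⁻¹ • s, fun h => (hs ?_).elim⟩
      simpa [mul_smul] using h
  choose s hs using hwitness
  refine ⟨Polynomial.ofFn (n + 1) (Fin.cons a (s ∘ e.symm)), ?_, fun σ τ h => hs (σ, τ) ?_⟩
  · exact Polynomial.ofFn_coeff_eq_val_of_lt _ n.succ_pos
  · have hcoeff := congrArg (Polynomial.coeff · (e (σ, τ) + 1)) h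
    simp only [Polynomial.coeff_map, Polynomial.coeff_smul] at hcoeff
    rw [Polynomial.ofFn_coeff_eq_val_of_lt _ (Nat.succ_lt_succ (e (σ, τ)).2),
      Ideal.Quotient.mk_eq_mk_iff_sub_mem] at hcoeff
    simpa [Fin.cons] using hcoeff

theorem not_C_C_dvd_eval_derivative_prodXSubSMul_charpoly [Fintype Γ] {π : S} (hπ : Prime π)
    (H : Subgroup Γ) [Fintype H] {Z : S[X]}
    (hZ : ∀ σ τ : Γ, (σ • Z).map (Ideal.Quotient.mk (Ideal.span {π})) =
      (τ • Z).map (Ideal.Quotient.mk (Ideal.span {π})) → σ * τ⁻¹ ∈ H) :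
    ¬ Polynomial.C (Polynomial.C π) ∣
      (prodXSubSMul Γ S[X][X] (MulSemiringAction.charpoly H Z)).derivative.eval
        (MulSemiringAction.charpoly H Z) := by
  have : (Ideal.span {π}).IsPrime := (Ideal.span_singleton_prime hπ.ne_zero).2 hπ
  let φ : S[X] →+* (S ⧸ Ideal.span {π})[X] :=
    Polynomial.mapRingHom (Ideal.Quotient.mk (Ideal.span {π}))
  let Φ : S[X][X] →+* (S ⧸ Ideal.span {π})[X][X] := Polynomial.mapRingHom φ
  have hΦ : Φ (Polynomial.C (Polynomial.C π)) = 0 := by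
    simp [φ, Φ, Ideal.Quotient.eq_zero_iff_mem.2 (Ideal.mem_span_singleton_self π)]
  intro hdvd
  have hzero := map_dvd Φ hdvd
  rw [hΦ, zero_dvd_iff] at hzero
  obtain ⟨σ, hne, hσ⟩ :=
    exists_smul_ne_of_map_eval_derivative_prodXSubSMul_eq_zero (Γ := Γ)
      (D := (S ⧸ Ideal.span {π})[X][X]) Φ hzero
  obtain ⟨τ, hτ, hστ⟩ := exists_smul_eq_of_map_charpoly_eq φ H Z σ hσ
  refine hne (smul_charpoly_of_mem H Z ?_)
  simpa using H.mul_mem (hZ σ τ hστ) hτ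

theorem pow_dvd_derivation [Finite Γ] [IsDomain S] {R : Type*} [CommRing R] [Algebra R S]
    (E : Derivation R S S) {d π : S} (hE : ∀ b : S, (∀ σ : Γ, σ • b = b) → d ∣ E b)
    (hπ : Prime π) {n : ℕ} (hn : π ^ n ∣ d) (H : Subgroup Γ) (hH : IsUnit (Nat.card H : S))
    (hin : (Ideal.span {π}).inertia Γ ≤ H) {a : S} (ha : ∀ σ ∈ H, σ • a = a) : π ^ n ∣ E a := by
  have := Fintype.ofFinite Γ
  have := Fintype.ofFinite H
  -- The conjugates of the `H`-orbit polynomial `Q` of `Z` that differ from `Q` still do so modulo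
  -- `π`, hence `π ^ n` divides the image of `Q`; the element `-|H| a` is among the coefficients.
  obtain ⟨Z, rfl, hZ⟩ := exists_polynomial_separating_inertia (Γ := Γ) (Ideal.span {π}) a
  set Q := MulSemiringAction.charpoly H Z
  have hCπ : Prime (Polynomial.C (Polynomial.C π)) :=
    Polynomial.prime_C_iff.2 (Polynomial.prime_C_iff.2 hπ)
  have hCE := dvd_eval_derivative_prodXSubSMul_mul_derivation
    (coeffDerivation (coeffDerivation E))
    (C_dvd_coeffDerivation _ (C_dvd_coeffDerivation E hE)) Q
  have hQ : Polynomial.C (Polynomial.C (π ^ n)) ∣ coeffDerivation (coeffDerivation E) Q := by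
    rw [map_pow, map_pow]
    refine hCπ.pow_dvd_of_dvd_mul_left n ?_ (dvd_trans ?_ hCE)
    · exact not_C_C_dvd_eval_derivative_prodXSubSMul_charpoly hπ H
        fun σ τ h => hin (hZ σ τ h)
    · rw [← map_pow, ← map_pow]
      exact map_dvd Polynomial.C (map_dvd Polynomial.C hn)
  have hcoeff := (Polynomial.C_dvd_iff_dvd_coeff _ _).1
    ((Polynomial.C_dvd_iff_dvd_coeff _ _).1 hQ (Fintype.card H - 1)) 0
  rw [coeff_coeffDerivation, coeff_coeffDerivation, coeff_zero_coeff_charpoly H ha, map_neg,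
    dvd_neg, ← nsmul_eq_mul, map_nsmul, nsmul_eq_mul] at hcoeff
  exact hH.dvd_mul_left.1 hcoeff

theorem dvd_derivation_of_inertia_le [Finite Γ] [IsDomain S] [UniqueFactorizationMonoid S]
    {R : Type*} [CommRing R] [Algebra R S]
    (E : Derivation R S S) {d : S} (hd : d ≠ 0) (hE : ∀ b : S, (∀ σ : Γ, σ • b = b) → d ∣ E b)
    (H : Subgroup Γ) (hH : IsUnit (Nat.card H : S))
    (hin : ∀ π : S, Prime π → (Ideal.span {π}).inertia Γ ≤ H)
    {a : S} (ha : ∀ σ ∈ H, σ • a = a) : d ∣ E a := by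
  rw [UniqueFactorizationMonoid.dvd_iff_emultiplicity_le hd]
  intro π hπ
  rw [emultiplicity_le_emultiplicity_iff]
  exact fun n hn => pow_dvd_derivation E hE hπ hn H hH (hin π hπ) ha

theorem eq_top_of_forall_smul_eq [Finite Γ] [IsDomain S] [FaithfulSMul Γ S] (H : Subgroup Γ)
    (h : ∀ a : S, (∀ σ ∈ H, σ • a = a) → ∀ σ : Γ, σ • a = a) : H = ⊤ := by
  have hΓ : IsGaloisGroup Γ (FixedPoints.subring S Γ) S :=
    ⟨inferInstance, inferInstance, ⟨fun b hb => ⟨⟨b, hb⟩, rfl⟩⟩⟩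
  have hH : IsGaloisGroup H (FixedPoints.subring S H) S :=
    ⟨inferInstance, inferInstance, ⟨fun b hb => ⟨⟨b, hb⟩, rfl⟩⟩⟩
  rw [← IsGaloisGroup.fixingSubgroup_range_algebraMap Γ (FixedPoints.subring S Γ)
    (FixedPoints.subring S H) S H]
  refine eq_top_iff.2 fun σ _ => ?_
  rw [mem_fixingSubgroup_iff]
  rintro _ ⟨a, rfl⟩
  exact h _ (fun τ hτ => a.2 ⟨τ, hτ⟩) σ

end CodimensionOne

section TraceZeroInvariants

variable {Γ A A' : Type*} [Group Γ] [Fintype Γ] [AddCommGroup A] [DistribMulAction Γ A]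
  [AddCommGroup A'] [DistribMulAction Γ A']

/-- The `H`-invariant elements of a `Γ`-module whose sum over the whole of `Γ` vanishes; up to
torsion they measure the difference between the invariants of `H` and those of `Γ`. -/
def traceZeroInvariants (A : Type*) [AddCommGroup A] [DistribMulAction Γ A] (H : Subgroup Γ) :
    AddSubgroup A where
  carrier := {a | (∀ σ ∈ H, σ • a = a) ∧ ∑ σ : Γ, σ • a = 0}
  zero_mem' := by simp
  add_mem' := by
    rintro a b ⟨ha, ha'⟩ ⟨hb, hb'⟩
    refine ⟨fun σ hσ => by rw [smul_add, ha σ hσ, hb σ hσ], ?_⟩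
    simp only [smul_add, Finset.sum_add_distrib, ha', hb', add_zero]
  neg_mem' := by
    rintro a ⟨ha, ha'⟩
    refine ⟨fun σ hσ => by rw [smul_neg, ha σ hσ], ?_⟩
    simp only [smul_neg, Finset.sum_neg_distrib, ha', neg_zero]

theorem map_mem_traceZeroInvariants {H : Subgroup Γ} {a : A} (ha : a ∈ traceZeroInvariants A H)
    (θ : A →+ A') (hθ : ∀ σ : Γ, θ (σ • a) = σ • θ a) : θ a ∈ traceZeroInvariants A' H := by
  refine ⟨fun σ hσ => by rw [← hθ, ha.1 σ hσ], ?_⟩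
  simp only [← hθ]
  rw [← map_sum, ha.2, map_zero]

theorem smul_sum_smul (σ : Γ) (a : A) : σ • ∑ τ : Γ, τ • a = ∑ τ : Γ, τ • a := by
  rw [Finset.smul_sum]
  exact Fintype.sum_equiv (Equiv.mulLeft σ) _ _ fun τ => smul_smul σ τ a

theorem card_nsmul_sub_sum_smul_mem_traceZeroInvariants {H : Subgroup Γ} {a : A}
    (ha : ∀ σ ∈ H, σ • a = a) :
    Fintype.card Γ • a - ∑ σ : Γ, σ • a ∈ traceZeroInvariants A H := by
  refine ⟨fun σ hσ => ?_, ?_⟩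
  · rw [smul_sub, smul_comm σ, ha σ hσ, smul_sum_smul]
  · simp only [smul_sub, smul_sum_smul, Finset.sum_sub_distrib, Finset.sum_const, Finset.card_univ]
    simp only [smul_comm _ (Fintype.card Γ) a, ← Finset.smul_sum, sub_self]

theorem eq_top_of_traceZeroInvariants_eq_bot {S : Type*} [CommRing S] [IsDomain S]
    [MulSemiringAction Γ S] [FaithfulSMul Γ S] {H : Subgroup Γ}
    (hcard : (Nat.card Γ : S) ≠ 0) (hH : traceZeroInvariants S H = ⊥) : H = ⊤ := by
  refine eq_top_of_forall_smul_eq H fun a ha σ => mul_left_cancel₀ hcard ?_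
  have htrace := (AddSubgroup.eq_bot_iff_forall _).1 hH _
    (card_nsmul_sub_sum_smul_mem_traceZeroInvariants ha)
  rw [sub_eq_zero, nsmul_eq_mul, ← Nat.card_eq_fintype_card] at htrace
  have hinv := smul_sum_smul σ a
  rw [← htrace, ← nsmul_eq_mul, smul_comm] at hinv
  rwa [← nsmul_eq_mul, ← nsmul_eq_mul]

end TraceZeroInvariants

section Jacobian

open scoped Matrix

variable {R σ τ ι : Type*} [CommRing R]

/-- The vector of partial derivatives of a polynomial. -/
noncomputable def grad (a : MvPolynomial σ R) : σ → MvPolynomial σ R :=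
  fun j => pderiv j a

/-- The Jacobian matrix, whose `i`-th row is the gradient of `f i`. -/
noncomputable def jacobianMatrix (f : ι → MvPolynomial σ R) : Matrix ι σ (MvPolynomial σ R) :=
  Matrix.of fun i => grad (f i)

theorem grad_C (c : R) : grad (C c : MvPolynomial σ R) = 0 :=
  funext fun _ => pderiv_C

theorem grad_zero : grad (0 : MvPolynomial σ R) = 0 :=
  funext fun j => map_zero (pderiv j)

theorem grad_X [DecidableEq σ] (i : σ) : grad (X i : MvPolynomial σ R) = Pi.single i 1 :=
  funext fun j => by rw [grad, pderiv_X, Pi.single_comm]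

theorem grad_add (a b : MvPolynomial σ R) : grad (a + b) = grad a + grad b :=
  funext fun j => map_add (pderiv j) a b

theorem grad_mul (a b : MvPolynomial σ R) : grad (a * b) = a • grad b + b • grad a :=
  funext fun j => (pderiv j).leibniz a b

theorem grad_sum {κ : Type*} (s : Finset κ) (f : κ → MvPolynomial σ R) :
    grad (∑ i ∈ s, f i) = ∑ i ∈ s, grad (f i) := by
  ext1 j
  simp only [grad, map_sum, Finset.sum_apply]

theorem mkDerivation_eq_grad_dotProduct [Fintype σ] (v : σ → MvPolynomial σ R)
    (a : MvPolynomial σ R) :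
    mkDerivation R v a = grad a ⬝ᵥ v := by
  classical
  induction a using MvPolynomial.induction_on with
  | C c => rw [derivation_C, grad_C, zero_dotProduct]
  | add a b ha hb => rw [map_add, grad_add, add_dotProduct, ha, hb]
  | mul_X a i ha =>
    rw [Derivation.leibniz, mkDerivation_X, grad_mul, grad_X, add_dotProduct, smul_dotProduct,
      smul_dotProduct, single_one_dotProduct, ha]

theorem grad_algHom_apply [Fintype σ] (ψ : MvPolynomial σ R →ₐ[R] MvPolynomial τ R)
    (a : MvPolynomial σ R) :
    grad (ψ a) = (ψ ∘ grad a) ᵥ* jacobianMatrix fun i => ψ (X i) := by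
  classical
  induction a using MvPolynomial.induction_on with
  | C c =>
    have hψ0 : ψ ∘ (0 : σ → MvPolynomial σ R) = 0 := funext fun _ => map_zero ψ
    rw [← algebraMap_eq, ψ.commutes, algebraMap_eq, algebraMap_eq, grad_C, grad_C, hψ0,
      Matrix.zero_vecMul]
  | add a b ha hb =>
    have hψadd : ψ ∘ (grad a + grad b) = ψ ∘ grad a + ψ ∘ grad b :=
      funext fun _ => map_add ψ _ _
    rw [map_add, grad_add, grad_add, hψadd, Matrix.add_vecMul, ha, hb]
  | mul_X a i ha =>
    have hψmul : ψ ∘ (a • (Pi.single i 1 : σ → MvPolynomial σ R) +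
        (X i : MvPolynomial σ R) • grad a) =
        ψ a • Pi.single i 1 + ψ (X i) • ψ ∘ grad a := by
      ext1 j
      simp [Pi.single_apply, apply_ite ψ]
    rw [map_mul, grad_mul, grad_mul, grad_X, hψmul, Matrix.add_vecMul, Matrix.smul_vecMul,
      Matrix.smul_vecMul, Matrix.single_one_vecMul, ← ha]
    rfl

theorem grad_algHom_apply_of_vecMul [Finite σ] [Fintype ι]
    (ψ : MvPolynomial σ R →ₐ[R] MvPolynomial σ R)
    {f : ι → MvPolynomial σ R} (hf : ∀ i, ψ (f i) = f i) {a : MvPolynomial σ R}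
    {b : ι → MvPolynomial σ R} (hb : grad a = b ᵥ* jacobianMatrix f) :
    grad (ψ a) = (ψ ∘ b) ᵥ* jacobianMatrix f := by
  have := Fintype.ofFinite σ
  have hJ : jacobianMatrix f = (jacobianMatrix f).map ψ * jacobianMatrix fun i => ψ (X i) := by
    refine Matrix.ext fun i j => ?_
    have h := grad_algHom_apply ψ (f i)
    rw [hf] at h
    exact congrFun h j
  have hψb : ψ ∘ grad a = (ψ ∘ b) ᵥ* (jacobianMatrix f).map ψ := by
    ext1 j
    rw [hb]
    exact RingHom.map_vecMul (ψ : MvPolynomial σ R →+* MvPolynomial σ R) _ b j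
  rw [grad_algHom_apply, hψb, Matrix.vecMul_vecMul, ← hJ]

theorem dvd_derivation_of_mem_adjoin {A : Type*} [CommRing A] [Algebra R A] (E : Derivation R A A)
    {d : A} {s : Set A} (hs : ∀ x ∈ s, d ∣ E x) {a : A} (ha : a ∈ Algebra.adjoin R s) :
    d ∣ E a := by
  induction ha using Algebra.adjoin_induction with
  | mem x hx => exact hs x hx
  | algebraMap c => simp
  | add x y _ _ hx hy =>
    rw [map_add]
    exact dvd_add hx hy
  | mul x y _ _ hx hy =>
    rw [Derivation.leibniz, smul_eq_mul, smul_eq_mul]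
    exact dvd_add (hy.mul_left _) (hx.mul_left _)

end Jacobian

section Invariants

open scoped Matrix

variable {R σ Γ : Type*} [CommRing R] [Fintype σ] [Group Γ]
  [MulSemiringAction Γ (MvPolynomial σ R)]

theorem grad_smul_of_grad_eq_vecMul [SMulCommClass Γ R (MvPolynomial σ R)]
    {f : σ → MvPolynomial σ R} (hf : ∀ (g : Γ) i, g • f i = f i) (g : Γ)
    {a : MvPolynomial σ R} {b : σ → MvPolynomial σ R} (hb : grad a = b ᵥ* jacobianMatrix f) :
    grad (g • a) = (g • b) ᵥ* jacobianMatrix f :=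
  grad_algHom_apply_of_vecMul (MulSemiringAction.toAlgHom R (MvPolynomial σ R) g) (hf g) hb

theorem det_dvd_mkDerivation_adjugate_apply [DecidableEq σ] (f : σ → MvPolynomial σ R) (i l : σ) :
    (jacobianMatrix f).det ∣ mkDerivation R ((jacobianMatrix f).adjugate.col i) (f l) := by
  have h : mkDerivation R ((jacobianMatrix f).adjugate.col i) (f l) =
      (jacobianMatrix f * (jacobianMatrix f).adjugate) l i :=
    mkDerivation_eq_grad_dotProduct _ _
  rw [h, Matrix.mul_adjugate, Matrix.smul_apply, smul_eq_mul]
  exact dvd_mul_right _ _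

variable [IsDomain R]

theorem exists_grad_eq_vecMul_jacobianMatrix [DecidableEq σ] {f : σ → MvPolynomial σ R}
    (hf : (jacobianMatrix f).det ≠ 0) {a : MvPolynomial σ R}
    (ha : ∀ i, (jacobianMatrix f).det ∣ mkDerivation R ((jacobianMatrix f).adjugate.col i) a) :
    ∃ b : σ → MvPolynomial σ R, grad a = b ᵥ* jacobianMatrix f := by
  choose b hb using ha
  refine ⟨b, smul_right_injective _ hf ?_⟩
  have hcol : grad a ᵥ* (jacobianMatrix f).adjugate = (jacobianMatrix f).det • b := by
    ext1 i
    rw [Pi.smul_apply, smul_eq_mul, ← hb, mkDerivation_eq_grad_dotProduct]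
    rfl
  calc (jacobianMatrix f).det • grad a
      = grad a ᵥ* ((jacobianMatrix f).adjugate * jacobianMatrix f) := by
        rw [Matrix.adjugate_mul, Matrix.vecMul_smul, Matrix.vecMul_one]
    _ = (jacobianMatrix f).det • (b ᵥ* jacobianMatrix f) := by
        rw [← Matrix.vecMul_vecMul, hcol, Matrix.smul_vecMul]

theorem vecMul_jacobianMatrix_injective [DecidableEq σ] {f : σ → MvPolynomial σ R}
    (hf : (jacobianMatrix f).det ≠ 0) : Function.Injective (· ᵥ* jacobianMatrix f) := by
  intro b c h
  refine sub_eq_zero.1 (Matrix.eq_zero_of_vecMul_eq_zero hf ?_)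
  rw [Matrix.sub_vecMul]
  exact sub_eq_zero.2 h

theorem det_jacobianMatrix_ne_zero [DecidableEq σ] [Finite Γ] {f : σ → MvPolynomial σ R}
    (hinv : ∀ a : MvPolynomial σ R, (∀ g : Γ, g • a = a) → a ∈ Algebra.adjoin R (Set.range f)) :
    (jacobianMatrix f).det ≠ 0 := by
  intro hdet
  obtain ⟨v, hv, hfv⟩ := Matrix.exists_mulVec_eq_zero_iff.2 hdet
  have hf (l : σ) : mkDerivation R v (f l) = 0 := by
    rw [mkDerivation_eq_grad_dotProduct]
    exact congrFun hfv l
  have hE : mkDerivation R v = 0 := derivation_eq_zero_of_forall_smul_eq (Γ := Γ) _ fun a ha =>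
    zero_dvd_iff.1 <| dvd_derivation_of_mem_adjoin _
      (Set.forall_mem_range.2 fun l => zero_dvd_iff.2 (hf l)) (hinv a ha)
  refine hv (funext fun j => ?_)
  rw [← mkDerivation_X R v j, hE]
  rfl

theorem exists_grad_eq_vecMul_jacobianMatrix_of_inertia_le [Finite Γ]
    [UniqueFactorizationMonoid R] {f : σ → MvPolynomial σ R}
    (hinv : ∀ a : MvPolynomial σ R, (∀ g : Γ, g • a = a) → a ∈ Algebra.adjoin R (Set.range f))
    {H : Subgroup Γ} (hH : IsUnit (Nat.card H : MvPolynomial σ R))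
    (hin : ∀ π : MvPolynomial σ R, Prime π → (Ideal.span {π}).inertia Γ ≤ H)
    {a : MvPolynomial σ R} (ha : ∀ g ∈ H, g • a = a) :
    ∃ b : σ → MvPolynomial σ R, grad a = b ᵥ* jacobianMatrix f := by
  classical
  have hdet := det_jacobianMatrix_ne_zero hinv
  refine exists_grad_eq_vecMul_jacobianMatrix hdet fun i => ?_
  refine dvd_derivation_of_inertia_le _ hdet (fun b hb => ?_) H hH hin ha
  exact dvd_derivation_of_mem_adjoin _
    (Set.forall_mem_range.2 (det_dvd_mkDerivation_adjugate_apply f i)) (hinv b hb)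

theorem mem_traceZeroInvariants_of_grad_eq_vecMul [DecidableEq σ] [Fintype Γ]
    [SMulCommClass Γ R (MvPolynomial σ R)] {f : σ → MvPolynomial σ R}
    (hdet : (jacobianMatrix f).det ≠ 0) (hf : ∀ (g : Γ) i, g • f i = f i) {H : Subgroup Γ}
    {a : MvPolynomial σ R} (ha : a ∈ traceZeroInvariants (MvPolynomial σ R) H)
    {b : σ → MvPolynomial σ R} (hb : grad a = b ᵥ* jacobianMatrix f) :
    b ∈ traceZeroInvariants (σ → MvPolynomial σ R) H := by
  have hinj := vecMul_jacobianMatrix_injective hdet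
  have hsmul (g : Γ) := grad_smul_of_grad_eq_vecMul hf g hb
  have hfix (g : Γ) (hg : g ∈ H) : (g • b) ᵥ* jacobianMatrix f = b ᵥ* jacobianMatrix f := by
    rw [← hsmul, ha.1 g hg, hb]
  have htrace : (∑ g : Γ, g • b) ᵥ* jacobianMatrix f = 0 ᵥ* jacobianMatrix f := by
    rw [Matrix.sum_vecMul, Finset.sum_congr rfl fun g _ => (hsmul g).symm, ← grad_sum, ha.2,
      grad_zero, Matrix.zero_vecMul]
  exact ⟨fun g hg => hinj (hfix g hg), hinj htrace⟩

end Invariants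

section FrobeniusDescent

variable {R σ : Type*} [CommRing R]

theorem dvd_of_grad_eq_zero [IsDomain R] (p : ℕ) [CharP R p] {a : MvPolynomial σ R}
    (ha : grad a = 0) {m : σ →₀ ℕ} (hm : a.coeff m ≠ 0) (j : σ) : p ∣ m j := by
  obtain hj | hj := eq_or_ne (m j) 0
  · exact hj ▸ dvd_zero p
  obtain ⟨m, rfl⟩ : ∃ m', m = m' + Finsupp.single j 1 :=
    ⟨m - Finsupp.single j 1,
      (tsub_add_cancel_of_le (Finsupp.single_le_iff.2 (Nat.one_le_iff_ne_zero.2 hj))).symm⟩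
  have hcoeff := coeff_pderiv (i := j) a m
  rw [show pderiv j a = 0 from congrFun ha j, coeff_zero, eq_comm, mul_eq_zero] at hcoeff
  rw [← CharP.cast_eq_zero_iff R p, Finsupp.add_apply, Finsupp.single_eq_same, Nat.cast_add_one]
  exact hcoeff.resolve_left hm

theorem mem_closure_C_mul_pow_of_grad_eq_zero [IsDomain R] (p : ℕ) [CharP R p]
    {a : MvPolynomial σ R} (ha : grad a = 0) :
    a ∈ AddSubmonoid.closure {x | ∃ (c : R) (u : MvPolynomial σ R), x = C c * u ^ p} := by
  rw [← support_sum_monomial_coeff a]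
  refine sum_mem fun m hm => AddSubmonoid.subset_closure ?_
  have hdvd := dvd_of_grad_eq_zero p ha (mem_support_iff.1 hm)
  refine ⟨a.coeff m, monomial (m.mapRange (· / p) (Nat.zero_div p)) 1, ?_⟩
  rw [monomial_pow, one_pow, C_mul_monomial, mul_one]
  congr 2
  ext j
  exact (Nat.mul_div_cancel' (hdvd j)).symm

variable (p : ℕ)

/-- The operator on polynomials that contracts `X ^ (p • m)` to `X ^ m`, discards the other
monomials and applies `φ` to the coefficients. If `φ` is `p⁻¹`-linear, it sends `c • u ^ p` to
`φ c • u` in characteristic `p`, so that it extracts `p`-th roots even if `R` is not perfect. -/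
noncomputable def frobeniusContract [NeZero p] (φ : R →+ R) :
    MvPolynomial σ R →+ MvPolynomial σ R where
  toFun a := .ofCoeff <| Finsupp.mapRange φ φ.map_zero <|
    (AddMonoidAlgebra.coeff a).comapDomain (p • ·) (smul_right_injective _ (NeZero.ne p)).injOn
  map_zero' := by ext; simp
  map_add' a b := by ext; exact φ.map_add _ _

variable {p}

theorem coeff_frobeniusContract [NeZero p] (φ : R →+ R) (a : MvPolynomial σ R) (m : σ →₀ ℕ) :
    (frobeniusContract p φ a).coeff m = φ (a.coeff (p • m)) :=
  rfl

theorem isHomogeneous_frobeniusContract [NeZero p] (φ : R →+ R) {a : MvPolynomial σ R} {n : ℕ}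
    (ha : a.IsHomogeneous n) : (frobeniusContract p φ a).IsHomogeneous (n / p) := by
  intro m hm
  have hpm : a.coeff (p • m) ≠ 0 := fun h => hm (by rw [coeff_frobeniusContract, h, map_zero])
  rw [← ha hpm, map_nsmul, smul_eq_mul, Nat.mul_div_cancel_left _ (NeZero.pos p)]

variable [Fact p.Prime]

theorem frobeniusContract_C_mul_pow [CharP R p] {φ : R →+ R}
    (hφ : ∀ c w : R, φ (c ^ p * w) = c * φ w) (c : R) (u : MvPolynomial σ R) :
    frobeniusContract p φ (C c * u ^ p) = C (φ c) * u := by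
  ext m
  rw [coeff_frobeniusContract, coeff_C_mul, coeff_C_mul, ← map_frobenius_expand, coeff_map,
    coeff_expand_smul p (NeZero.ne p), frobenius_def, mul_comm, hφ, mul_comm]

theorem frobeniusContract_algHom_apply [IsDomain R] [CharP R p] {φ : R →+ R}
    (hφ : ∀ c w : R, φ (c ^ p * w) = c * φ w) (ψ : MvPolynomial σ R →ₐ[R] MvPolynomial σ R)
    {a : MvPolynomial σ R} (ha : grad a = 0) :
    frobeniusContract p φ (ψ a) = ψ (frobeniusContract p φ a) := by
  have hC (c : R) : ψ (C c) = C c := ψ.commutes c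
  have hmem := mem_closure_C_mul_pow_of_grad_eq_zero p ha
  clear ha
  induction hmem using AddSubmonoid.closure_induction with
  | mem x hx =>
    obtain ⟨c, u, rfl⟩ := hx
    rw [map_mul, map_pow, hC, frobeniusContract_C_mul_pow hφ, frobeniusContract_C_mul_pow hφ,
      map_mul, hC]
  | zero => simp only [map_zero]
  | add x y _ _ hx hy => simp only [map_add, hx, hy]

variable [CharP k p]

variable (p) in
theorem exists_frobenius_inv_linear_apply_ne_zero {v : k} (hv : v ≠ 0) :
    ∃ φ : k →+ k, (∀ c w : k, φ (c ^ p * w) = c * φ w) ∧ φ v ≠ 0 := by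
  have hdual (V : Type _) [AddCommGroup V] [Module k V] {v : V} (hv : v ≠ 0) :
      ∃ φ : V →+ k, (∀ (c : k) (w : V), φ (c • w) = c * φ w) ∧ φ v ≠ 0 := by
    obtain ⟨φ, hφ⟩ := not_forall.1 (mt (Module.forall_dual_apply_eq_zero_iff k v).1 hv)
    exact ⟨φ.toAddMonoidHom, φ.map_smul, hφ⟩
  -- Functionals that are linear when `k` acts on itself through Frobenius are `p⁻¹`-linear.
  exact @hdual k _ (Module.compHom k (frobenius k p)) v hv

theorem exists_frobeniusContract_ne_zero {a : MvPolynomial σ k} (ha : grad a = 0) (ha0 : a ≠ 0) :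
    ∃ φ : k →+ k, (∀ c w : k, φ (c ^ p * w) = c * φ w) ∧ frobeniusContract p φ a ≠ 0 := by
  obtain ⟨m, hm⟩ := ne_zero_iff.1 ha0
  obtain ⟨φ, hφ, hφm⟩ := exists_frobenius_inv_linear_apply_ne_zero p hm
  have hpm : p • m.mapRange (· / p) (Nat.zero_div p) = m := by
    ext j
    exact Nat.mul_div_cancel' (dvd_of_grad_eq_zero p ha hm j)
  refine ⟨φ, hφ, ne_zero_iff.2 ⟨m.mapRange (· / p) (Nat.zero_div p), ?_⟩⟩
  rwa [coeff_frobeniusContract, hpm]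

end FrobeniusDescent

theorem exists_addMonoidHom_isHomogeneous_lt_of_grad_eq_zero {σ : Type*} {a : MvPolynomial σ k}
    (ha : grad a = 0) (ha0 : a ≠ 0) {n : ℕ} (hn : n ≠ 0) (hom : a.IsHomogeneous n) :
    ∃ D : MvPolynomial σ k →+ MvPolynomial σ k, D a ≠ 0 ∧ (∃ m < n, (D a).IsHomogeneous m) ∧
      ∀ ψ : MvPolynomial σ k →ₐ[k] MvPolynomial σ k, D (ψ a) = ψ (D a) := by
  obtain ⟨p, hchar⟩ := CharP.exists k
  obtain hp | rfl := CharP.char_is_prime_or_zero k p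
  · have : Fact p.Prime := ⟨hp⟩
    obtain ⟨φ, hφ, hφa⟩ := exists_frobeniusContract_ne_zero (p := p) ha ha0
    exact ⟨frobeniusContract p φ, hφa,
      ⟨n / p, Nat.div_lt_self (Nat.pos_of_ne_zero hn) hp.one_lt,
        isHomogeneous_frobeniusContract φ hom⟩,
      fun ψ => frobeniusContract_algHom_apply hφ ψ ha⟩
  · obtain ⟨m, hm⟩ := ne_zero_iff.1 ha0
    have hm0 : m = 0 := Finsupp.ext fun j => zero_dvd_iff.1 (dvd_of_grad_eq_zero 0 ha hm j)
    refine (hn ?_).elim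
    rw [← hom hm, hm0, map_zero]

section GradedAction

open scoped Matrix

variable {R σ ι Γ : Type*} [CommRing R]

theorem eq_zero_of_isHomogeneous_of_mem_pow_idealOfVars {a : MvPolynomial σ R} {m n : ℕ}
    (hmn : m < n) (hom : a.IsHomogeneous m) (ha : a ∈ idealOfVars σ R ^ n) : a = 0 := by
  ext x
  by_contra hx
  have hdeg : Finsupp.degree x = m := by
    rw [Finsupp.degree_eq_weight_one]
    exact hom hx
  exact hx ((mem_pow_idealOfVars_iff' _ _).1 ha x (hdeg ▸ hmn))

theorem mem_pow_idealOfVars_of_homogeneousComponent_eq_zero {a : MvPolynomial σ R} {n : ℕ}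
    (ha : ∀ m < n, homogeneousComponent m a = 0) : a ∈ idealOfVars σ R ^ n := by
  refine (mem_pow_idealOfVars_iff' _ _).2 fun x hx => ?_
  have hcoeff := congrArg (coeff x) (ha _ hx)
  rwa [coeff_homogeneousComponent, if_pos rfl] at hcoeff

theorem grad_eq_zero_of_eq_vecMul [Fintype ι] {a : MvPolynomial σ R} {n : ℕ} (hn : n ≠ 0)
    (hom : a.IsHomogeneous n) {b : ι → MvPolynomial σ R}
    (hb : ∀ i, b i ∈ idealOfVars σ R ^ n) {M : Matrix ι σ (MvPolynomial σ R)}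
    (h : grad a = b ᵥ* M) : grad a = 0 := by
  ext1 j
  refine eq_zero_of_isHomogeneous_of_mem_pow_idealOfVars (Nat.sub_one_lt hn) hom.pderiv ?_
  rw [h]
  exact Ideal.sum_mem _ fun i _ => Ideal.mul_mem_right _ _ (hb i)

variable [Group Γ] [MulSemiringAction Γ (MvPolynomial σ R)]

theorem homogeneousComponent_smul
    (hdeg : ∀ (g : Γ) (n : ℕ) (a : MvPolynomial σ R), a.IsHomogeneous n → (g • a).IsHomogeneous n)
    (g : Γ) (n : ℕ) (a : MvPolynomial σ R) :
    homogeneousComponent n (g • a) = g • homogeneousComponent n a := by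
  have hcomp (i : ℕ) : homogeneousComponent n (g • homogeneousComponent i a) =
      if n = i then g • homogeneousComponent i a else 0 :=
    homogeneousComponent_of_mem (hdeg g i _ (homogeneousComponent_isHomogeneous i a))
  conv_lhs => rw [← sum_homogeneousComponent a, Finset.smul_sum, map_sum]
  simp only [hcomp]
  rw [Finset.sum_ite_eq, ite_eq_left_iff]
  intro hn
  rw [homogeneousComponent_eq_zero, smul_zero]
  simpa using hn

theorem homogeneousComponent_mem_traceZeroInvariants [Fintype Γ]
    (hdeg : ∀ (g : Γ) (n : ℕ) (a : MvPolynomial σ R), a.IsHomogeneous n → (g • a).IsHomogeneous n)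
    {H : Subgroup Γ} {a : MvPolynomial σ R}
    (ha : a ∈ traceZeroInvariants (MvPolynomial σ R) H) (n : ℕ) :
    homogeneousComponent n a ∈ traceZeroInvariants (MvPolynomial σ R) H :=
  map_mem_traceZeroInvariants ha (homogeneousComponent n).toAddMonoidHom
    fun g => homogeneousComponent_smul hdeg g n a

theorem C_eq_zero_of_mem_traceZeroInvariants [IsDomain R] [Fintype Γ]
    [SMulCommClass Γ R (MvPolynomial σ R)] (hcard : (Nat.card Γ : R) ≠ 0) {H : Subgroup Γ} {c : R}
    (hc : C c ∈ traceZeroInvariants (MvPolynomial σ R) H) : (C c : MvPolynomial σ R) = 0 := by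
  have hfix (g : Γ) : g • (C c : MvPolynomial σ R) = C c := smul_algebraMap g c
  have htrace := hc.2
  simp only [hfix] at htrace
  rw [Finset.sum_const, Finset.card_univ, ← Nat.card_eq_fintype_card, nsmul_eq_mul,
    ← map_natCast (C : R →+* MvPolynomial σ R), mul_eq_zero, C_eq_zero] at htrace
  exact htrace.resolve_left hcard

end GradedAction

section GradedReflectionCriterion

variable {σ Γ : Type*} [Group Γ] [MulSemiringAction Γ (MvPolynomial σ k)]
  [SMulCommClass Γ k (MvPolynomial σ k)]

theorem eq_zero_of_grad_eq_zero_of_mem_traceZeroInvariants [Fintype Γ] {H : Subgroup Γ} {n : ℕ}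
    (hn : n ≠ 0)
    (ih : ∀ m < n, ∀ a ∈ traceZeroInvariants (MvPolynomial σ k) H, a.IsHomogeneous m → a = 0)
    {a : MvPolynomial σ k} (ha : a ∈ traceZeroInvariants (MvPolynomial σ k) H)
    (hom : a.IsHomogeneous n) (hgrad : grad a = 0) : a = 0 := by
  by_contra ha0
  obtain ⟨D, hD0, ⟨m, hm, hDm⟩, hD⟩ :=
    exists_addMonoidHom_isHomogeneous_lt_of_grad_eq_zero hgrad ha0 hn hom
  have hDa : D a ∈ traceZeroInvariants (MvPolynomial σ k) H :=
    map_mem_traceZeroInvariants ha D fun g =>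
      hD (MulSemiringAction.toAlgHom k (MvPolynomial σ k) g)
  exact hD0 (ih m hm _ hDa hDm)

variable [Finite σ]

theorem traceZeroInvariants_eq_bot_of_inertia_le [Fintype Γ]
    (hdeg : ∀ (g : Γ) (n : ℕ) (a : MvPolynomial σ k), a.IsHomogeneous n → (g • a).IsHomogeneous n)
    (hcard : (Nat.card Γ : k) ≠ 0) {f : σ → MvPolynomial σ k}
    (hinv : ∀ a : MvPolynomial σ k, (∀ g : Γ, g • a = a) ↔ a ∈ Algebra.adjoin k (Set.range f))
    {H : Subgroup Γ} (hH : IsUnit (Nat.card H : MvPolynomial σ k))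
    (hin : ∀ π : MvPolynomial σ k, Prime π → (Ideal.span {π}).inertia Γ ≤ H) :
    traceZeroInvariants (MvPolynomial σ k) H = ⊥ := by
  classical
  have := Fintype.ofFinite σ
  have hdet := det_jacobianMatrix_ne_zero fun a => (hinv a).1
  have hf (g : Γ) (i : σ) : g • f i = f i :=
    (hinv (f i)).2 (Algebra.subset_adjoin (Set.mem_range_self i)) g
  have hhom (n : ℕ) : ∀ a ∈ traceZeroInvariants (MvPolynomial σ k) H, a.IsHomogeneous n →
      a = 0 := by
    induction n using Nat.strong_induction_on with
    | _ n ih =>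
    intro a ha hom
    obtain rfl | hn := eq_or_ne n 0
    · rw [totalDegree_eq_zero_iff_eq_C.1 (Nat.le_zero.1 hom.totalDegree_le)] at ha ⊢
      exact C_eq_zero_of_mem_traceZeroInvariants hcard ha
    obtain ⟨b, hb⟩ := exists_grad_eq_vecMul_jacobianMatrix_of_inertia_le
      (fun a => (hinv a).1) hH hin ha.1
    have hbH := mem_traceZeroInvariants_of_grad_eq_vecMul hdet hf ha hb
    refine eq_zero_of_grad_eq_zero_of_mem_traceZeroInvariants hn ih ha hom
      (grad_eq_zero_of_eq_vecMul hn hom (fun i => ?_) hb)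
    have hbi : b i ∈ traceZeroInvariants (MvPolynomial σ k) H :=
      map_mem_traceZeroInvariants hbH (Pi.evalAddMonoidHom _ i) fun _ => rfl
    exact mem_pow_idealOfVars_of_homogeneousComponent_eq_zero fun m hm =>
      ih m hm _ (homogeneousComponent_mem_traceZeroInvariants hdeg hbi m)
        (homogeneousComponent_isHomogeneous m _)
  refine (AddSubgroup.eq_bot_iff_forall _).2 fun a ha => ?_
  rw [← sum_homogeneousComponent a]
  exact Finset.sum_eq_zero fun n _ =>
    hhom n _ (homogeneousComponent_mem_traceZeroInvariants hdeg ha n)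
      (homogeneousComponent_isHomogeneous n a)

theorem eq_top_of_inertia_le [Finite Γ] [FaithfulSMul Γ (MvPolynomial σ k)]
    (hdeg : ∀ (g : Γ) (n : ℕ) (a : MvPolynomial σ k), a.IsHomogeneous n → (g • a).IsHomogeneous n)
    (hcard : (Nat.card Γ : k) ≠ 0) {f : σ → MvPolynomial σ k}
    (hinv : ∀ a : MvPolynomial σ k, (∀ g : Γ, g • a = a) ↔ a ∈ Algebra.adjoin k (Set.range f))
    {H : Subgroup Γ}
    (hin : ∀ π : MvPolynomial σ k, Prime π → (Ideal.span {π}).inertia Γ ≤ H) : H = ⊤ := by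
  have := Fintype.ofFinite Γ
  have hunit (n : ℕ) (hn : (n : k) ≠ 0) : IsUnit (n : MvPolynomial σ k) := by
    rw [← map_natCast (C : k →+* MvPolynomial σ k)]
    exact (isUnit_iff_ne_zero.2 hn).map C
  have hH : (Nat.card H : k) ≠ 0 :=
    ne_zero_of_dvd_ne_zero hcard (Nat.cast_dvd_cast H.card_subgroup_dvd_card)
  exact eq_top_of_traceZeroInvariants_eq_bot (hunit _ hcard).ne_zero
    (traceZeroInvariants_eq_bot_of_inertia_le hdeg hcard hinv (hunit _ hH) hin)

end GradedReflectionCriterion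

section LinearAction

theorem totalDegree_ne_zero_of_not_isUnit {σ : Type*} {a : MvPolynomial σ k} (ha0 : a ≠ 0)
    (ha : ¬ IsUnit a) : a.totalDegree ≠ 0 := by
  rw [Ne, totalDegree_eq_zero_iff_eq_C]
  intro h
  rw [h, C_ne_zero] at ha0
  rw [h] at ha
  exact ha ((isUnit_iff_ne_zero.2 ha0).map C)

theorem exists_eq_C_mul_of_dvd {R σ : Type*} [CommRing R] [IsDomain R] {a b : MvPolynomial σ R}
    (hb : b.totalDegree ≠ 0) (ha : a.totalDegree ≤ 1) (h : b ∣ a) : ∃ c : R, a = C c * b := by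
  obtain ⟨w, rfl⟩ := h
  obtain rfl | hw := eq_or_ne w 0
  · exact ⟨0, by rw [mul_zero, C_0, zero_mul]⟩
  have hb0 : b ≠ 0 := fun h => hb (h ▸ totalDegree_zero)
  rw [totalDegree_mul_of_isDomain hb0 hw] at ha
  refine ⟨w.coeff 0, ?_⟩
  rw [← totalDegree_eq_zero_iff_eq_C.1 (show w.totalDegree = 0 by lia), mul_comm]

theorem matrixAct_X (g : GL (Fin r) k) (i : Fin r) :
    matrixAct g (X i) = ∑ j, g.val i j • X j :=
  aeval_X _ i

theorem matrixAct_one : matrixAct (1 : GL (Fin r) k) = AlgHom.id k _ := by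
  ext1 i
  simp [matrixAct_X, Matrix.one_apply]

theorem matrixAct_comp (g h : GL (Fin r) k) :
    (matrixAct g).comp (matrixAct h) = matrixAct (h * g) := by
  ext1 i
  simp only [AlgHom.comp_apply, matrixAct_X, map_sum, map_smul, Units.val_mul, Matrix.mul_apply,
    Finset.smul_sum, Finset.sum_smul, smul_smul]
  exact Finset.sum_comm

theorem isHomogeneous_matrixAct (g : GL (Fin r) k) {n : ℕ} {a : MvPolynomial (Fin r) k}
    (ha : a.IsHomogeneous n) : (matrixAct g a).IsHomogeneous n := by
  rw [← one_mul n]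
  refine ha.aeval _ fun i => IsHomogeneous.sum _ _ _ fun j _ => ?_
  rw [smul_eq_C_mul]
  exact (isHomogeneous_X k j).C_mul _

theorem coeff_matrixAct_X_sub_X (g : GL (Fin r) k) (i j : Fin r) :
    (matrixAct g (X i) - X i).coeff (Finsupp.single j 1) = (g.val - 1) i j := by
  classical
  rw [matrixAct_X, coeff_sub, coeff_sum]
  simp [coeff_X, Matrix.one_apply, Finsupp.single_left_inj, eq_comm]

theorem matrixAct_injective :
    Function.Injective (matrixAct : GL (Fin r) k → MvPolynomial (Fin r) k →ₐ[k] _) := by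
  intro g h hgh
  ext i j
  have hcoeff := coeff_matrixAct_X_sub_X g i j
  rw [hgh, coeff_matrixAct_X_sub_X] at hcoeff
  simpa using hcoeff.symm

theorem eq_zero_of_rank_eq_zero {R m n : Type*} [CommRing R] [IsDomain R] [Fintype n]
    {A : Matrix m n R} (hA : A.rank = 0) : A = 0 := by
  rw [Matrix.rank, Submodule.finrank_eq_zero, LinearMap.range_eq_bot] at hA
  exact Matrix.mulVec_injective (funext fun v => (DFunLike.congr_fun hA v).trans
    (Matrix.zero_mulVec v).symm)

theorem rank_sub_one_eq_one_of_forall_dvd {g : GL (Fin r) k} (hg : g ≠ 1)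
    {π : MvPolynomial (Fin r) k} (hπ0 : π ≠ 0) (hπ : ¬ IsUnit π)
    (h : ∀ i, π ∣ matrixAct g (X i) - X i) : (g.val - 1).rank = 1 := by
  have hdeg (i : Fin r) : (matrixAct g (X i) - X i).totalDegree ≤ 1 :=
    ((isHomogeneous_matrixAct g (isHomogeneous_X k i)).sub (isHomogeneous_X k i)).totalDegree_le
  choose c hc using fun i =>
    exists_eq_C_mul_of_dvd (totalDegree_ne_zero_of_not_isUnit hπ0 hπ) (hdeg i) (h i)
  have hrank_one : g.val - 1 = Matrix.vecMulVec c fun j => π.coeff (Finsupp.single j 1) := by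
    ext i j
    rw [← coeff_matrixAct_X_sub_X, hc, coeff_C_mul, Matrix.vecMulVec_apply]
  refine le_antisymm (hrank_one ▸ Matrix.rank_vecMulVec_le _ _) ?_
  exact Nat.one_le_iff_ne_zero.2 fun h0 =>
    hg (Units.ext (sub_eq_zero.1 (eq_zero_of_rank_eq_zero h0)))

/-- The left action of `GL (Fin r) k` on polynomials through `matrixAct`. Since `matrixAct` is
contravariant, `g` acts as `matrixAct g⁻¹`. -/
noncomputable instance : MulSemiringAction (GL (Fin r) k) (MvPolynomial (Fin r) k) where
  smul g a := matrixAct g⁻¹ a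
  one_smul a := by
    change matrixAct (1 : GL (Fin r) k)⁻¹ a = a
    rw [inv_one, matrixAct_one, AlgHom.id_apply]
  mul_smul g h a := by
    change matrixAct (g * h)⁻¹ a = matrixAct g⁻¹ (matrixAct h⁻¹ a)
    rw [← AlgHom.comp_apply, matrixAct_comp, mul_inv_rev]
  smul_zero g := map_zero (matrixAct g⁻¹)
  smul_add g := map_add (matrixAct g⁻¹)
  smul_one g := map_one (matrixAct g⁻¹)
  smul_mul g := map_mul (matrixAct g⁻¹)

theorem smul_eq_matrixAct_inv (g : GL (Fin r) k) (a : MvPolynomial (Fin r) k) :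
    g • a = matrixAct g⁻¹ a :=
  rfl

instance : SMulCommClass (GL (Fin r) k) k (MvPolynomial (Fin r) k) where
  smul_comm g c a := map_smul (matrixAct g⁻¹) c a

instance : FaithfulSMul (GL (Fin r) k) (MvPolynomial (Fin r) k) where
  eq_of_smul_eq_smul h := inv_injective (matrixAct_injective (AlgHom.ext h))

theorem isPseudoReflection_of_mem_inertia {g : GL (Fin r) k} (hfin : IsOfFinOrder g) (hg : g ≠ 1)
    {π : MvPolynomial (Fin r) k} (hπ : Prime π)
    (h : g ∈ (Ideal.span {π}).inertia (GL (Fin r) k)) : IsPseudoReflection g := by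
  refine ⟨hfin, hg, rank_sub_one_eq_one_of_forall_dvd hg hπ.ne_zero hπ.not_isUnit fun i => ?_⟩
  have hi := inv_mem h (X i)
  rw [smul_eq_matrixAct_inv, inv_inv] at hi
  exact Ideal.mem_span_singleton.1 hi

end LinearAction

/-- One direction of the Shephard–Todd–Chevalley theorem: if a finite group `G` acts
linearly on `V = k^r`, with `char k` not dividing `|G|`, and the invariant ring
`k[V]^G` is a polynomial algebra on `r = dim V` generators, then `G` acts on `V` as a
group generated by pseudo-reflections. -/
theorem reflection_group_of_polynomial_invariants
    (G : Type*) [Group G] [Finite G] (hchar : ¬ (ringChar k : ℕ) ∣ Nat.card G)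
    (ρ : G →* GL (Fin r) k) (f : Fin r → MvPolynomial (Fin r) k)
    (hind : AlgebraicIndependent k f)
    (hinv : ∀ h : MvPolynomial (Fin r) k,
      (∀ g : G, matrixAct (ρ g) h = h) ↔ h ∈ Algebra.adjoin k (Set.range f)) :
    Subgroup.closure {g | g ∈ ρ.range ∧ IsPseudoReflection g} = ρ.range := by
  refine le_antisymm ((Subgroup.closure_le _).2 fun g hg => hg.1) ?_
  have hfin : Finite ρ.range := .of_surjective _ ρ.rangeRestrict_surjective
  have hcard : (Nat.card ρ.range : k) ≠ 0 := fun h =>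
    hchar ((ringChar.dvd h).trans (Subgroup.card_range_dvd ρ))
  have hfix (a : MvPolynomial (Fin r) k) :
      (∀ σ : ρ.range, σ • a = a) ↔ a ∈ Algebra.adjoin k (Set.range f) := by
    rw [← hinv]
    refine ⟨fun h g => ?_, ?_⟩
    · simpa [Subgroup.smul_def, smul_eq_matrixAct_inv] using h ⟨ρ g⁻¹, g⁻¹, rfl⟩
    · rintro h ⟨_, g, rfl⟩
      simpa [Subgroup.smul_def, smul_eq_matrixAct_inv] using h g⁻¹
  rw [← Subgroup.subgroupOf_eq_top]
  refine eq_top_of_inertia_le (fun σ n a => isHomogeneous_matrixAct _) hcard hfix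
    fun π hπ σ hσ => ?_
  obtain hσ1 | hσ1 := eq_or_ne (σ : GL (Fin r) k) 1
  · exact Subgroup.mem_subgroupOf.2 (hσ1 ▸ one_mem _)
  · exact Subgroup.mem_subgroupOf.2 <| Subgroup.subset_closure
      ⟨σ.2, isPseudoReflection_of_mem_inertia
        (MonoidHom.isOfFinOrder ρ.range.subtype (isOfFinOrder_of_finite σ)) hσ1 hπ hσ⟩
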